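/- arXiv:1702.05543 — 5 statements merged into one kernel-verified Lean document; each statement's English description precedes it below -/
import Mathlib

section
/- Let G = (U,V,E) be a bipartite graph with |U| = s. For an integer i ≥ 0, let G_i be the bipartite graph obtained from G by adding s+i new disjoint matching edges, where each new edge has one endpoint added to the left class and one endpoint added to the right class. For j ∈ {0,…,s}, let x_j be the number of independent sets of G of maximum size μ(G) that have exactly s−j vertices in U. Let w_i be the number of independent sets of G_i of maximum size μ(G_i) = μ(G)+s+i that have exactly s vertices in the left class of G_i. Then w_i = Σ_{j=0}^{s} x_j · C(s+i, j). -/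
/-- The adjacency relation of the bipartite graph `G_i` obtained from a bipartite graph
with edge relation `E : U → V → Prop` by adding `m` new disjoint matching edges:
the `a`-th new left vertex is joined precisely to the `a`-th new right vertex. -/
def matchingExtAdj {U V : Type*} (E : U → V → Prop) {m : ℕ} :
    U ⊕ Fin m → V ⊕ Fin m → Prop
  | Sum.inl u, Sum.inl v => E u v
  | Sum.inr a, Sum.inr b => a = b
  | _, _ => False

/-!
Adding a matching is a disjoint union of graphs. An independent set of a disjoint union is a pair of
independent sets of the two parts, and it is maximum exactly when both components are. Hence the
numbers of maximum independent sets with prescribed left size convolve. A maximum independent set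
of a perfect matching selects one endpoint of each edge, so it is determined by its left part, which
is an arbitrary set of indices; this contributes the binomial coefficients.
-/

open Finset.HasAntidiagonal (antidiagonal mem_antidiagonal)

section IndepPair

variable {U V U' V' : Type*} {E : U → V → Prop} {F : U' → V' → Prop} {μ ν : ℕ}

/-- An independent set of the bipartite graph with edge relation `E`, encoded as the pair of its
left and right parts. -/
def IsIndepPair (E : U → V → Prop) (p : Finset U × Finset V) : Prop :=
  ∀ u ∈ p.1, ∀ v ∈ p.2, ¬ E u v

/-- The sizes of the independent sets of a bipartite graph; the independence number is the greatest
element. -/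
def indepSizes (E : U → V → Prop) : Set ℕ :=
  {n | ∃ p, IsIndepPair E p ∧ p.1.card + p.2.card = n}

/-- The independent sets of size `n` with `k` vertices in the left class. For `n = μ(G)` and
`k = s - j` their number is the `x_j` of the statement. -/
def indepPairs (E : U → V → Prop) (n k : ℕ) : Set (Finset U × Finset V) :=
  {p | IsIndepPair E p ∧ p.1.card + p.2.card = n ∧ p.1.card = k}

theorem IsIndepPair.card_add_card_le {p : Finset U × Finset V} (hp : IsIndepPair E p)
    (hμ : μ ∈ upperBounds (indepSizes E)) : p.1.card + p.2.card ≤ μ :=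
  hμ ⟨p, hp, rfl⟩

theorem pairwiseDisjoint_indepPairs_prod (s : Set (ℕ × ℕ)) :
    s.PairwiseDisjoint fun ab ↦ indepPairs E μ ab.1 ×ˢ indepPairs F ν ab.2 := by
  intro ab _ cd _ hne
  refine Set.disjoint_left.2 fun pq hab hcd ↦ hne (Prod.ext ?_ ?_)
  · exact hab.1.2.2.symm.trans hcd.1.2.2
  · exact hab.2.2.2.symm.trans hcd.2.2.2

end IndepPair

section DisjointUnion

variable {U V U' V' : Type*} {E : U → V → Prop} {F : U' → V' → Prop} {μ ν : ℕ}

/-- The bijection splitting a pair of left and right vertex sets of a disjoint union of two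
bipartite graphs into its traces on the two graphs. -/
def splitPair : Finset (U ⊕ U') × Finset (V ⊕ V') ≃
    (Finset U × Finset V) × (Finset U' × Finset V') :=
  (Finset.sumEquiv.toEquiv.prodCongr Finset.sumEquiv.toEquiv).trans (.prodProdProdComm ..)

theorem card_fst_splitPair (p : Finset (U ⊕ U') × Finset (V ⊕ V')) :
    (splitPair p).1.1.card + (splitPair p).2.1.card = p.1.card :=
  Finset.card_toLeft_add_card_toRight

theorem card_snd_splitPair (p : Finset (U ⊕ U') × Finset (V ⊕ V')) :
    (splitPair p).1.2.card + (splitPair p).2.2.card = p.2.card :=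
  Finset.card_toLeft_add_card_toRight

theorem isIndepPair_liftRel_iff {p : Finset (U ⊕ U') × Finset (V ⊕ V')} :
    IsIndepPair (Sum.LiftRel E F) p ↔
      IsIndepPair E (splitPair p).1 ∧ IsIndepPair F (splitPair p).2 := by
  simp [IsIndepPair, splitPair]

theorem indepPairs_liftRel (hμ : μ ∈ upperBounds (indepSizes E))
    (hν : ν ∈ upperBounds (indepSizes F)) (k : ℕ) :
    indepPairs (Sum.LiftRel E F) (μ + ν) k =
      splitPair ⁻¹' ⋃ ab ∈ (antidiagonal k : Set (ℕ × ℕ)),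
        indepPairs E μ ab.1 ×ˢ indepPairs F ν ab.2 := by
  ext p
  have hfst := card_fst_splitPair p
  have hsnd := card_snd_splitPair p
  simp only [Set.mem_preimage, Set.mem_iUnion₂, Finset.mem_coe, mem_antidiagonal, Set.mem_prod,
    Prod.exists]
  constructor
  · rintro ⟨hp, hsize, hleft⟩
    obtain ⟨hE, hF⟩ := isIndepPair_liftRel_iff.1 hp
    have hEle := hE.card_add_card_le hμ
    have hFle := hF.card_add_card_le hν
    exact ⟨_, _, by omega, ⟨hE, by omega, rfl⟩, ⟨hF, by omega, rfl⟩⟩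
  · rintro ⟨a, b, hab, ⟨hE, hEsize, hEleft⟩, ⟨hF, hFsize, hFleft⟩⟩
    exact ⟨isIndepPair_liftRel_iff.2 ⟨hE, hF⟩, by omega, by omega⟩

theorem ncard_indepPairs_liftRel [Finite U] [Finite V] [Finite U'] [Finite V']
    (hμ : μ ∈ upperBounds (indepSizes E)) (hν : ν ∈ upperBounds (indepSizes F)) (k : ℕ) :
    (indepPairs (Sum.LiftRel E F) (μ + ν) k).ncard =
      ∑ ab ∈ antidiagonal k, (indepPairs E μ ab.1).ncard * (indepPairs F ν ab.2).ncard := by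
  rw [indepPairs_liftRel hμ hν, Set.ncard_preimage_of_injective_subset_range splitPair.injective
      (by simp only [splitPair.range_eq_univ, Set.subset_univ]),
    (Finset.finite_toSet _).ncard_biUnion (fun _ _ ↦ Set.toFinite _)
      (pairwiseDisjoint_indepPairs_prod _), finsum_mem_coe_finset]
  simp only [Set.ncard_prod]

end DisjointUnion

section Matching

variable {α : Type*}

theorem isIndepPair_eq_iff {p : Finset α × Finset α} :
    IsIndepPair (Eq : α → α → Prop) p ↔ Disjoint p.1 p.2 :=
  Finset.disjoint_iff_ne.symm

variable (α) [Fintype α]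

theorem card_mem_upperBounds_indepSizes_eq :
    Fintype.card α ∈ upperBounds (indepSizes (Eq : α → α → Prop)) := by
  rintro _ ⟨p, hp, rfl⟩
  rw [← Finset.card_disjUnion _ _ (isIndepPair_eq_iff.1 hp)]
  exact Finset.card_le_univ _

theorem indepPairs_eq_card [DecidableEq α] (k : ℕ) :
    indepPairs (Eq : α → α → Prop) (Fintype.card α) k =
      (fun A : Finset α ↦ (A, Aᶜ)) '' (Finset.univ.powersetCard k : Finset (Finset α)) := by
  ext ⟨A, B⟩
  simp only [indepPairs, isIndepPair_eq_iff, Set.mem_ofPred_eq, Set.mem_image, Finset.mem_coe,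
    Finset.mem_powersetCard_univ, Prod.mk.injEq]
  constructor
  · rintro ⟨hdisj, hsize, hA⟩
    exact ⟨A, hA, rfl, Finset.compl_eq_of_disjoint_of_card_add_eq hdisj hsize⟩
  · rintro ⟨_, hA, rfl, rfl⟩
    exact ⟨disjoint_compl_right, Finset.card_add_card_compl _, hA⟩

theorem ncard_indepPairs_eq_card (k : ℕ) :
    (indepPairs (Eq : α → α → Prop) (Fintype.card α) k).ncard = (Fintype.card α).choose k := by
  classical
  rw [indepPairs_eq_card, Set.ncard_image_of_injective _ fun _ _ h ↦ congrArg Prod.fst h,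
    Set.ncard_coe_finset, Finset.card_powersetCard, Finset.card_univ]

end Matching

theorem matchingExtAdj_eq_liftRel {U V : Type*} (E : U → V → Prop) (m : ℕ) :
    matchingExtAdj E (m := m) = Sum.LiftRel E Eq := by
  ext (u | a) (v | b) <;> simp [matchingExtAdj]

theorem stmt2_general {U V : Type*} [Finite U] [Finite V] (E : U → V → Prop) {μ : ℕ}
    (hμ : IsGreatest (indepSizes E) μ) (m k : ℕ) :
    (indepPairs (matchingExtAdj E (m := m)) (μ + m) k).ncard =
      ∑ j ∈ Finset.range (k + 1), (indepPairs E μ (k - j)).ncard * m.choose j := by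
  have hbound := card_mem_upperBounds_indepSizes_eq (Fin m)
  have hchoose := ncard_indepPairs_eq_card (Fin m)
  rw [Fintype.card_fin] at hbound hchoose
  rw [matchingExtAdj_eq_liftRel, ncard_indepPairs_liftRel hμ.2 hbound,
    ← Finset.Nat.sum_antidiagonal_swap]
  simp only [hchoose, Prod.fst_swap, Prod.snd_swap]
  exact Finset.Nat.sum_antidiagonal_eq_sum_range_succ
    (fun j l ↦ (indepPairs E μ l).ncard * m.choose j) k

/-- Let `G = (U,V,E)` be a bipartite graph with `|U| = s`, and let `G_i` be obtained
from `G` by adding `s + i` new disjoint matching edges (one endpoint in each class).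
An independent set is represented as a pair `p = (p.1, p.2)` of its left and right parts,
with no edge between them. If `μ = μ(G)` is the maximum size of an independent set of `G`,
`x j` is the number of size-`μ` independent sets of `G` with exactly `s - j` vertices in `U`,
and `w` is the number of independent sets of `G_i` of size `μ(G_i) = μ + s + i` with
exactly `s` vertices in the left class, then `w = ∑_{j=0}^{s} x j * C(s+i, j)`. -/
theorem stmt2 {U V : Type*} [Fintype U] [Fintype V] (E : U → V → Prop)
    (s : ℕ) (hs : Fintype.card U = s) (i : ℕ) (μ : ℕ)
    (hμ : IsGreatest {n | ∃ p : Finset U × Finset V,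
        (∀ u ∈ p.1, ∀ v ∈ p.2, ¬ E u v) ∧ p.1.card + p.2.card = n} μ)
    (x : ℕ → ℕ)
    (hx : ∀ j, x j = Set.ncard {p : Finset U × Finset V |
        (∀ u ∈ p.1, ∀ v ∈ p.2, ¬ E u v) ∧ p.1.card + p.2.card = μ ∧ p.1.card = s - j})
    (w : ℕ)
    (hw : w = Set.ncard {p : Finset (U ⊕ Fin (s + i)) × Finset (V ⊕ Fin (s + i)) |
        (∀ u ∈ p.1, ∀ v ∈ p.2, ¬ matchingExtAdj E u v) ∧
        p.1.card + p.2.card = μ + s + i ∧ p.1.card = s}) :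
    w = ∑ j ∈ Finset.range (s + 1), x j * (s + i).choose j := by
  simp only [hw, hx, add_assoc]
  exact stmt2_general E hμ (s + i) s
end

section
/- For every non-negative integer s, the (s+1)×(s+1) matrix M over ℚ whose rows and columns are indexed by {0,…,s} and whose entries are M_{i,j} = C(s+i, j) is invertible. -/
/-!
By Pascal's rule, replacing each node `v i` by `v i + 1` in the matrix `C(v i, j)` adds to every
column the column before it, so the determinant does not change. Shifting the nodes `s, …, s + s`
down to `0, …, s` leaves the lower unitriangular Pascal matrix, whence the determinant is `1`.
-/

section BinomialDeterminants

variable {R : Type*} [CommRing R] {n : ℕ}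

theorem det_choose_succ (v : Fin n → ℕ) :
    (Matrix.of fun i j : Fin n => ((v i + 1).choose j : R)).det =
      (Matrix.of fun i j : Fin n => ((v i).choose j : R)).det := by
  cases n with
  | zero => simp only [Matrix.det_fin_zero]
  | succ n =>
    symm
    refine Matrix.det_eq_of_forall_col_eq_smul_add_pred (fun _ => -1) (fun i => ?_) fun i j => ?_
    · simp
    · have pascal : ((v i + 1).choose (j + 1) : R) = (v i).choose j + (v i).choose (j + 1) := by
        rw [Nat.choose_succ_succ', Nat.cast_add]
      simp [pascal]

theorem det_choose_add (a : ℕ) (v : Fin n → ℕ) :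
    (Matrix.of fun i j : Fin n => ((a + v i).choose j : R)).det =
      (Matrix.of fun i j : Fin n => ((v i).choose j : R)).det := by
  induction a with
  | zero => simp only [zero_add]
  | succ a ih =>
    simpa only [Nat.add_right_comm a 1] using (det_choose_succ fun i => a + v i).trans ih

variable (R n)

theorem det_choose_eq_one : (Matrix.of fun i j : Fin n => ((i : ℕ).choose j : R)).det = 1 := by
  have lower : (Matrix.of fun i j : Fin n => ((i : ℕ).choose j : R)).IsLowerTriangular := by
    intro i j (hij : (i : ℕ) < j)
    simp [Nat.choose_eq_zero_of_lt hij]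
  simp [Matrix.det_of_isLowerTriangular _ lower]

theorem stmt3_general (a : ℕ) :
    IsUnit (Matrix.of fun i j : Fin n => ((a + (i : ℕ)).choose (j : ℕ) : R)) := by
  rw [Matrix.isUnit_iff_isUnit_det, det_choose_add a fun i => (i : ℕ), det_choose_eq_one]
  exact isUnit_one

end BinomialDeterminants

/-- The `(s+1) × (s+1)` matrix over `ℚ` with rows and columns indexed by `{0,…,s}`
whose `(i,j)` entry is the binomial coefficient `C(s+i, j)` is invertible. -/
theorem stmt3 (s : ℕ) :
    IsUnit (Matrix.of fun i j : Fin (s + 1) => ((s + (i : ℕ)).choose (j : ℕ) : ℚ)) :=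
  stmt3_general ℚ (s + 1) s
end

section
/- Let k ≥ 2, let G = (V,E) be a finite simple graph containing at least one k-clique, and let ℓ = C(k,2). Let G'' be the bipartite graph with left class U = {u_e : e ∈ E}, right class V, and edges (u_e, v) whenever v is an endpoint of e. Then the number of ℓ-left-maximum independent sets of G'' equals the number of k-cliques of G. -/
/-!
If `k.choose 2` edges lie inside a vertex set `s`, then `s` has at least `k.choose 2` pairs, so
`k ≤ s.card` because `2 ≤ k`; if `s.card = k`, these edges must be all the pairs of `s`, which is
therefore a clique. A pair `(F, T)` is independent in the incidence graph iff every edge in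
`F` lies inside `Tᶜ`. So, once `G` has a `k`-clique, the optimal `T` are the complements of the
`k`-cliques, and each of them determines its `F`.
-/

theorem le_of_choose_le_choose {m n r : ℕ} (hr : r ≠ 0) (hrn : r ≤ n)
    (h : n.choose r ≤ m.choose r) : n ≤ m := by
  by_contra! hmn
  obtain ⟨n, rfl⟩ := Nat.exists_eq_add_one_of_ne_zero (Nat.ne_zero_of_lt hmn)
  obtain ⟨r, rfl⟩ := Nat.exists_eq_add_one_of_ne_zero hr
  have hpos : 0 < n.choose r := Nat.choose_pos (Nat.le_of_succ_le_succ hrn)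
  have hle : m.choose (r + 1) ≤ n.choose (r + 1) :=
    Nat.choose_le_choose _ (Nat.le_of_lt_succ hmn)
  have hpascal := Nat.choose_succ_succ' n r
  lia

theorem card_filter_sym2_not_isDiag {V : Type*} [DecidableEq V] (s : Finset V) :
    (s.sym2.filter (¬ ·.IsDiag)).card = s.card.choose 2 := by
  rw [Finset.sym2_eq_image, Sym2.filter_image_mk_not_isDiag, Sym2.card_image_offDiag]

section

open Finset

variable {V : Type*} (G : SimpleGraph V)

/-- `E(G[s])`, the set of edges of `G` with both endpoints in `s`, as edges of `G` rather than of
the induced subgraph, so that it can serve as the left part of an independent set. -/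
def edgesWithin [DecidableRel G.Adj] (s : Finset V) : Finset G.edgeSet :=
  s.sym2.subtype (· ∈ G.edgeSet)

/-- Independence in the bipartite incidence graph of `G`, whose left class is the edge set and
whose right class is the vertex set; `p.1` is the left part of the set and `p.2` its right part. -/
def IncidenceIndep (p : Finset G.edgeSet × Finset V) : Prop :=
  ∀ e ∈ p.1, ∀ v ∈ p.2, v ∉ (e : Sym2 V)

variable {G}

theorem isClique_iff_forall_mem_sym2 {s : Finset V} :
    G.IsClique (s : Set V) ↔ ∀ e ∈ s.sym2, ¬ e.IsDiag → e ∈ G.edgeSet := by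
  simp only [SimpleGraph.isClique_iff, Set.Pairwise, mem_coe, Sym2.forall, mk_mem_sym2_iff,
    Sym2.mk_isDiag_iff, SimpleGraph.mem_edgeSet]
  grind

section

variable [DecidableRel G.Adj]

theorem card_edgesWithin [DecidableEq V] (s : Finset V) :
    #(edgesWithin G s) = #{e ∈ s.sym2 | ¬ e.IsDiag ∧ e ∈ G.edgeSet} := by
  rw [edgesWithin, card_subtype]
  congr 1
  exact filter_congr fun e _ ↦ (and_iff_right_of_imp G.not_isDiag_of_mem_edgeSet).symm

theorem card_edgesWithin_le (s : Finset V) : #(edgesWithin G s) ≤ (#s).choose 2 := by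
  classical
  rw [card_edgesWithin, ← filter_filter, ← card_filter_sym2_not_isDiag]
  exact card_filter_le _ _

theorem card_edgesWithin_eq_choose_two_iff {s : Finset V} :
    #(edgesWithin G s) = (#s).choose 2 ↔ G.IsClique (s : Set V) := by
  classical
  rw [card_edgesWithin, ← filter_filter, ← card_filter_sym2_not_isDiag, card_filter_eq_iff,
    isClique_iff_forall_mem_sym2]
  simp only [mem_filter, and_imp]

theorem le_card_of_subset_edgesWithin {k : ℕ} (hk : 2 ≤ k) {F : Finset G.edgeSet} {s : Finset V}
    (hF : F ⊆ edgesWithin G s) (hcard : #F = k.choose 2) : k ≤ #s :=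
  le_of_choose_le_choose two_ne_zero hk <|
    hcard ▸ (card_le_card hF).trans (card_edgesWithin_le s)

theorem subset_edgesWithin_and_card_iff_isNClique {k : ℕ} {F : Finset G.edgeSet} {s : Finset V} :
    F ⊆ edgesWithin G s ∧ #F = k.choose 2 ∧ #s = k ↔
      G.IsNClique k s ∧ F = edgesWithin G s := by
  rw [SimpleGraph.isNClique_iff, ← card_edgesWithin_eq_choose_two_iff]
  constructor
  · rintro ⟨hF, hcard, rfl⟩
    have heq : F = edgesWithin G s :=
      eq_of_subset_of_card_le hF (hcard ▸ card_edgesWithin_le s)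
    exact ⟨⟨heq ▸ hcard, rfl⟩, heq⟩
  · rintro ⟨⟨hcard, rfl⟩, rfl⟩
    exact ⟨Subset.rfl, hcard, rfl⟩

end

variable [Fintype V]

theorem incidenceIndep_iff_subset_edgesWithin_compl [DecidableEq V] [DecidableRel G.Adj]
    {p : Finset G.edgeSet × Finset V} :
    IncidenceIndep G p ↔ p.1 ⊆ edgesWithin G p.2ᶜ := by
  simp only [IncidenceIndep, edgesWithin, subset_iff, mem_subtype, mem_sym2_iff, mem_compl]
  exact forall₂_congr fun e _ ↦ forall_congr' fun v ↦ imp_not_comm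

theorem ncard_incidenceIndep_eq_ncard_isNClique [DecidableEq V] (k : ℕ) :
    {p | IncidenceIndep G p ∧ #p.1 = k.choose 2 ∧ #p.2ᶜ = k}.ncard =
      {s | G.IsNClique k s}.ncard := by
  classical
  have hinj : Function.Injective fun s : Finset V ↦ (edgesWithin G s, sᶜ) :=
    fun s t h ↦ compl_injective (Prod.mk.inj h).2
  rw [← Set.ncard_image_of_injective _ hinj]
  congr 1
  ext ⟨F, T⟩
  simp only [Set.mem_ofPred_eq, incidenceIndep_iff_subset_edgesWithin_compl,
    subset_edgesWithin_and_card_iff_isNClique, Set.mem_image, Prod.mk.injEq]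
  constructor
  · rintro ⟨hT, rfl⟩
    exact ⟨Tᶜ, hT, rfl, compl_compl T⟩
  · rintro ⟨s, hs, rfl, rfl⟩
    rw [compl_compl]
    exact ⟨hs, rfl⟩

theorem isGreatest_card_incidenceIndep {k : ℕ} (hk : 2 ≤ k) (h : ∃ s, G.IsNClique k s) :
    IsGreatest {n | ∃ p, IncidenceIndep G p ∧ #p.1 = k.choose 2 ∧ #p.1 + #p.2 = n}
      (k.choose 2 + (Fintype.card V - k)) := by
  classical
  constructor
  · obtain ⟨s, hs⟩ := h
    obtain ⟨-, hcard, hsk⟩ := subset_edgesWithin_and_card_iff_isNClique.2 ⟨hs, rfl⟩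
    refine ⟨(edgesWithin G s, sᶜ), ?_, hcard, ?_⟩
    · rw [incidenceIndep_iff_subset_edgesWithin_compl, compl_compl]
    · rw [hcard, card_compl, hsk]
  · rintro _ ⟨p, hp, hcard, rfl⟩
    have hk_le : k ≤ #p.2ᶜ := le_card_of_subset_edgesWithin hk
      (incidenceIndep_iff_subset_edgesWithin_compl.1 hp) hcard
    have hsum := card_add_card_compl p.2
    lia

end

/-- Let `k ≥ 2` and let `G` be a finite simple graph containing at least one `k`-clique,
and let `ℓ = C(k,2)`.  Let `G''` be the bipartite graph whose left class is the edge set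
of `G`, whose right class is `V(G)`, and where an edge `e` is joined to a vertex `v` iff
`v ∈ e`.  Independent sets of `G''` are represented as pairs `p = (p.1, p.2)` of their
left and right parts; such a set is `ℓ`-left-maximum if `|p.1| = ℓ` and its total size
equals the maximum total size `μ` over all independent sets with `ℓ` left vertices.
Then the number of `ℓ`-left-maximum independent sets of `G''` equals the number of
`k`-cliques of `G`. -/
theorem stmt11 {V : Type*} [Fintype V] [DecidableEq V] (k : ℕ) (hk : 2 ≤ k)
    (G : SimpleGraph V) [DecidableRel G.Adj]
    (hclique : ∃ s : Finset V, G.IsNClique k s)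
    (ℓ : ℕ) (hℓ : ℓ = k.choose 2) (μ : ℕ)
    (hμ : IsGreatest {n | ∃ p : Finset G.edgeSet × Finset V,
        (∀ e ∈ p.1, ∀ v ∈ p.2, v ∉ (e : Sym2 V)) ∧ p.1.card = ℓ ∧
        p.1.card + p.2.card = n} μ) :
    Set.ncard {p : Finset G.edgeSet × Finset V |
        (∀ e ∈ p.1, ∀ v ∈ p.2, v ∉ (e : Sym2 V)) ∧ p.1.card = ℓ ∧
        p.1.card + p.2.card = μ}
      = Set.ncard {s : Finset V | G.IsNClique k s} := by
  subst hℓ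
  obtain rfl := hμ.unique (isGreatest_card_incidenceIndep hk hclique)
  obtain ⟨s, hs⟩ := hclique
  have hkV : k ≤ Fintype.card V := hs.card_eq ▸ s.card_le_univ
  rw [← ncard_incidenceIndep_eq_ncard_isNClique k]
  congr! 3 with p
  refine and_congr_right fun _ ↦ and_congr_right fun hp ↦ ?_
  have hsum := Finset.card_add_card_compl p.2
  lia
end

section
/- Let G = (U,V,E) be a bipartite graph on n vertices, let 0 ≤ ℓ ≤ |U|, let μ be the maximum size of an independent set S of G with |S ∩ U| = ℓ, let t be a positive integer, and let G' = (U, V×[t], E') where (u,(v,i)) ∈ E' if and only if (u,v) ∈ E. Then (2^t − 1)^{μ−ℓ} ≤ LIS_ℓ(G') ≤ 2^n · (2^t − 1)^{μ−ℓ}, where LIS_ℓ(G') denotes the number of independent sets S of G' with |S ∩ U| = ℓ. -/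
/-!
Collapsing each copy `(v, i)` to `v` sends an independent set of `G'` to one of `G` with the same
left part `A`. A set `B` of right vertices of `G` arises from `(2 ^ t - 1) ^ |B|` sets of copies,
since each `v ∈ B` must keep a nonempty set of its `t` copies. Hence
`LIS_ℓ(G') = ∑ (2 ^ t - 1) ^ |B|` over the `ℓ`-left independent sets `(A, B)` of `G`. The largest
term of this sum is `(2 ^ t - 1) ^ (μ - ℓ)`, and there are at most `2 ^ n` terms.
-/

open Finset

theorem card_pi_powerset_erase_empty {α β : Type*} [DecidableEq α] [DecidableEq β]
    (B : Finset β) (s : β → Finset α) :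
    #(B.pi fun b ↦ (s b).powerset.erase ∅) = ∏ b ∈ B, (2 ^ #(s b) - 1) := by
  simp only [card_pi, card_erase_of_mem (empty_mem_powerset _), card_powerset]

theorem card_filter_image_eq {α β : Type*} [Fintype α] [DecidableEq β] (f : α → β)
    (B : Finset β) :
    #{S : Finset α | S.image f = B} = ∏ b ∈ B, (2 ^ #{a | f a = b} - 1) := by
  classical
  have mem_choices (g : ∀ b ∈ B, Finset α) :
      g ∈ B.pi (fun b ↦ (powerset {a | f a = b}).erase ∅) ↔
        ∀ b hb, (g b hb).Nonempty ∧ ∀ a ∈ g b hb, f a = b := by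
    simp only [mem_pi, mem_erase, mem_powerset, nonempty_iff_ne_empty, subset_iff, mem_filter,
      mem_univ, true_and, ne_eq]
  rw [← card_pi_powerset_erase_empty]
  refine card_bij' (fun S _ b _ ↦ {a ∈ S | f a = b})
    (fun g _ ↦ ({a | ∃ h : f a ∈ B, a ∈ g (f a) h} : Finset α))
    ?mapsTo ?invMapsTo ?leftInv ?rightInv
  case mapsTo =>
    intro S hS
    obtain rfl : S.image f = B := by simpa using hS
    refine (mem_choices _).2 fun b hb ↦ ⟨?_, fun a ha ↦ (mem_filter.1 ha).2⟩
    obtain ⟨a, ha, rfl⟩ := mem_image.1 hb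
    exact ⟨a, mem_filter.2 ⟨ha, rfl⟩⟩
  case invMapsTo =>
    intro g hg
    simp only [mem_filter, mem_univ, true_and]
    refine Subset.antisymm (image_subset_iff.2 fun a ha ↦ (mem_filter.1 ha).2.1) fun b hb ↦ ?_
    obtain ⟨⟨a, ha⟩, fiber⟩ := (mem_choices g).1 hg b hb
    obtain rfl := fiber a ha
    exact mem_image_of_mem f (mem_filter.2 ⟨mem_univ _, hb, ha⟩)
  case leftInv =>
    intro S hS
    obtain rfl : S.image f = B := by simpa using hS
    ext a
    simpa using fun ha ↦ ⟨a, ha, rfl⟩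
  case rightInv =>
    intro g hg
    ext b hb a
    simp only [mem_filter, mem_univ, true_and]
    refine ⟨?_, fun ha ↦ ?_⟩
    · rintro ⟨⟨_, ha⟩, rfl⟩
      exact ha
    · obtain rfl := ((mem_choices g).1 hg b hb).2 a ha
      exact ⟨⟨hb, ha⟩, rfl⟩

section LeftIndepSets

variable {U V W : Type*} [Fintype U] [Fintype V] [Fintype W] {E : U → V → Prop} {ℓ : ℕ}

open Classical in
/-- The `ℓ`-left independent sets of the bipartite graph with edge relation `E`, each encoded as
the pair of its left and right parts. Their number is the paper's `LIS_ℓ`. -/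
noncomputable def leftIndepSets (E : U → V → Prop) (ℓ : ℕ) : Finset (Finset U × Finset V) :=
  {p | (∀ u ∈ p.1, ∀ v ∈ p.2, ¬ E u v) ∧ #p.1 = ℓ}

theorem mem_leftIndepSets {p : Finset U × Finset V} :
    p ∈ leftIndepSets E ℓ ↔ (∀ u ∈ p.1, ∀ v ∈ p.2, ¬ E u v) ∧ #p.1 = ℓ := by
  simp [leftIndepSets]

theorem ncard_setOf_leftIndep (E : U → V → Prop) (ℓ : ℕ) :
    Set.ncard {p : Finset U × Finset V | (∀ u ∈ p.1, ∀ v ∈ p.2, ¬ E u v) ∧ #p.1 = ℓ} =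
      #(leftIndepSets E ℓ) := by
  rw [← Set.ncard_coe_finset]
  congr 1
  ext p
  exact mem_leftIndepSets.symm

theorem card_leftIndepSets_le (E : U → V → Prop) (ℓ : ℕ) :
    #(leftIndepSets E ℓ) ≤ 2 ^ (Fintype.card U + Fintype.card V) :=
  (card_le_univ _).trans_eq <| by simp [pow_add]

theorem mk_image_mem_leftIndepSets [DecidableEq V] {f : W → V} {A : Finset U} {S : Finset W} :
    (A, S.image f) ∈ leftIndepSets E ℓ ↔ (A, S) ∈ leftIndepSets (fun u w ↦ E u (f w)) ℓ := by
  simp only [mem_leftIndepSets, forall_mem_image]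

theorem card_leftIndepSets_comap [DecidableEq V] (E : U → V → Prop) (f : W → V) (ℓ : ℕ) :
    #(leftIndepSets (fun u w ↦ E u (f w)) ℓ) =
      ∑ p ∈ leftIndepSets E ℓ, ∏ v ∈ p.2, (2 ^ #{w | f w = v} - 1) := by
  classical
  rw [card_eq_sum_card_fiberwise (f := Prod.map id (image f)) (t := leftIndepSets E ℓ)
    fun _ hq ↦ mk_image_mem_leftIndepSets.2 hq]
  refine sum_congr rfl fun ⟨A, B⟩ hAB ↦ ?_
  have fiber_eq : {q ∈ leftIndepSets (fun u w ↦ E u (f w)) ℓ | Prod.map id (image f) q = (A, B)} =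
      {A} ×ˢ ({S | S.image f = B} : Finset (Finset W)) := by
    ext ⟨A', S⟩
    simp only [mem_filter, Prod.map_apply, id_eq, Prod.mk.injEq, mem_product, mem_singleton,
      mem_univ, true_and, and_iff_right_iff_imp]
    rintro ⟨rfl, rfl⟩
    exact mk_image_mem_leftIndepSets.1 hAB
  rw [fiber_eq, card_product, card_singleton, one_mul, card_filter_image_eq]

variable (T : Type*) [Fintype T]

theorem card_leftIndepSets_blowUp (E : U → V → Prop) (ℓ : ℕ) :
    #(leftIndepSets (fun u (w : V × T) ↦ E u w.1) ℓ) =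
      ∑ p ∈ leftIndepSets E ℓ, (2 ^ Fintype.card T - 1) ^ #p.2 := by
  classical
  have card_fiber (v : V) : #{w : V × T | w.1 = v} = Fintype.card T := by
    have : ({w | w.1 = v} : Finset (V × T)) = {v} ×ˢ univ := by ext ⟨_, _⟩; simp [eq_comm]
    rw [this, card_product, card_singleton, one_mul, card_univ]
  simp only [card_leftIndepSets_comap E Prod.fst, card_fiber, prod_const]

theorem pow_card_le_card_leftIndepSets_blowUp {p : Finset U × Finset V}
    (hp : p ∈ leftIndepSets E ℓ) :
    (2 ^ Fintype.card T - 1) ^ #p.2 ≤ #(leftIndepSets (fun u (w : V × T) ↦ E u w.1) ℓ) := by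
  rw [card_leftIndepSets_blowUp]
  exact single_le_sum_of_canonicallyOrdered (f := fun q ↦ (2 ^ Fintype.card T - 1) ^ #q.2) hp

theorem card_leftIndepSets_blowUp_le [Nonempty T] {k : ℕ}
    (hk : ∀ p ∈ leftIndepSets E ℓ, #p.2 ≤ k) :
    #(leftIndepSets (fun u (w : V × T) ↦ E u w.1) ℓ) ≤
      #(leftIndepSets E ℓ) * (2 ^ Fintype.card T - 1) ^ k := by
  have base_pos : 0 < 2 ^ Fintype.card T - 1 :=
    Nat.sub_pos_of_lt (Nat.one_lt_two_pow Fintype.card_ne_zero)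
  rw [card_leftIndepSets_blowUp, ← smul_eq_mul]
  exact sum_le_card_nsmul _ _ _ fun p hp ↦ Nat.pow_le_pow_right base_pos (hk p hp)

end LeftIndepSets

/-- Let `G = (U,V,E)` be a bipartite graph on `n = |U| + |V|` vertices, `0 ≤ ℓ ≤ |U|`,
and let `μ` be the maximum size of an independent set of `G` with exactly `ℓ` left
vertices (independent sets are represented as pairs of their left and right parts).
Let `t ≥ 1` and let `G' = (U, V × [t], E')` with `(u,(v,i))` an edge iff `(u,v) ∈ E`.
Then `(2^t - 1)^{μ-ℓ} ≤ LIS_ℓ(G') ≤ 2^n · (2^t - 1)^{μ-ℓ}`, where `LIS_ℓ(G')` is the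
number of independent sets of `G'` with exactly `ℓ` left vertices. -/
theorem stmt13 {U V : Type*} [Fintype U] [Fintype V] (E : U → V → Prop)
    (n : ℕ) (hn : n = Fintype.card U + Fintype.card V)
    (ℓ : ℕ) (hℓ : ℓ ≤ Fintype.card U) (μ : ℕ)
    (hμ : IsGreatest {m | ∃ p : Finset U × Finset V,
        (∀ u ∈ p.1, ∀ v ∈ p.2, ¬ E u v) ∧ p.1.card = ℓ ∧ p.1.card + p.2.card = m} μ)
    (t : ℕ) (ht : 0 < t) :
    (2 ^ t - 1) ^ (μ - ℓ)
        ≤ Set.ncard {p : Finset U × Finset (V × Fin t) |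
            (∀ u ∈ p.1, ∀ w ∈ p.2, ¬ E u w.1) ∧ p.1.card = ℓ} ∧
      Set.ncard {p : Finset U × Finset (V × Fin t) |
            (∀ u ∈ p.1, ∀ w ∈ p.2, ¬ E u w.1) ∧ p.1.card = ℓ}
        ≤ 2 ^ n * (2 ^ t - 1) ^ (μ - ℓ) := by
  obtain ⟨⟨⟨A, B⟩, hAB, hA, hμB⟩, hmax⟩ := hμ
  have hB : #B = μ - ℓ := by simp only at hA hμB; omega
  have right_le : ∀ p ∈ leftIndepSets E ℓ, #p.2 ≤ μ - ℓ := by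
    intro p hp
    obtain ⟨hindep, hleft⟩ := mem_leftIndepSets.1 hp
    have : #p.1 + #p.2 ≤ μ := hmax ⟨p, hindep, hleft, rfl⟩
    omega
  have : NeZero t := ⟨ht.ne'⟩
  rw [ncard_setOf_leftIndep (fun u (w : V × Fin t) ↦ E u w.1)]
  constructor
  · simpa only [Fintype.card_fin, hB] using
      pow_card_le_card_leftIndepSets_blowUp (Fin t) (mem_leftIndepSets.2 ⟨hAB, hA⟩)
  · calc #(leftIndepSets (fun u (w : V × Fin t) ↦ E u w.1) ℓ)
      _ ≤ #(leftIndepSets E ℓ) * (2 ^ t - 1) ^ (μ - ℓ) := by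
        simpa only [Fintype.card_fin] using card_leftIndepSets_blowUp_le (Fin t) right_le
      _ ≤ 2 ^ n * (2 ^ t - 1) ^ (μ - ℓ) := by
        rw [hn]
        gcongr
        exact card_leftIndepSets_le E ℓ
end

section
/- Let G and H be finite simple graphs. Suppose there exists a graph homomorphism from G to H that is surjective on vertices, and also a graph homomorphism from H to G that is surjective on vertices. Then G and H are isomorphic. -/
/-!
By finiteness the composite `g ∘ f` of the two surjections is injective, so it acts injectively on
the finite set of ordered adjacent pairs and hence permutes it. A non-adjacent pair therefore
cannot be sent to an adjacent one by `g ∘ f`, and a fortiori not by `f`: the bijection `f` reflects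
adjacency.
-/

theorem apply_mem_iff_of_injective_of_mapsTo {α : Type*} {s : Set α} {e : α → α} (hs : s.Finite)
    (he : Function.Injective e) (hmaps : Set.MapsTo e s s) {x : α} : e x ∈ s ↔ x ∈ s := by
  have himage : e '' s = s := ((hs.injOn_iff_bijOn_of_mapsTo hmaps).mp he.injOn).image_eq
  calc
    e x ∈ s ↔ e x ∈ e '' s := by rw [himage]
    _ ↔ x ∈ s := he.mem_set_image

section RelHom

variable {α β : Type*} {r : α → α → Prop} {s : β → β → Prop}

theorem relHom_map_rel_iff_of_injective (hr : {p : α × α | r p.1 p.2}.Finite) (e : r →r r)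
    (he : Function.Injective e) {a b : α} : r (e a) (e b) ↔ r a b :=
  apply_mem_iff_of_injective_of_mapsTo (x := (a, b)) hr (he.prodMap he) fun _ hp => e.map_rel hp

theorem relHom_map_rel_iff_of_injective_comp (hr : {p : α × α | r p.1 p.2}.Finite) (f : r →r s)
    (g : s →r r) (hgf : Function.Injective (g ∘ f)) {a b : α} : s (f a) (f b) ↔ r a b :=
  ⟨fun h => (relHom_map_rel_iff_of_injective hr (g.comp f) hgf).mp (g.map_rel h), f.map_rel⟩

theorem stmt17_general [Finite α] (f : r →r s) (hf : Function.Surjective f) (g : s →r r)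
    (hg : Function.Surjective g) : Nonempty (r ≃r s) := by
  have hgf : Function.Injective (g ∘ f) := Finite.injective_iff_surjective.mpr (hg.comp hf)
  have hbij : Function.Bijective f := ⟨hgf.of_comp, hf⟩
  exact ⟨⟨Equiv.ofBijective f hbij, relHom_map_rel_iff_of_injective_comp (Set.toFinite _) f g hgf⟩⟩

end RelHom

/-- If there is a vertex-surjective graph homomorphism from the finite simple graph `G`
to the finite simple graph `H`, and also a vertex-surjective graph homomorphism from
`H` to `G`, then `G` and `H` are isomorphic. -/
theorem stmt17 {V W : Type*} [Fintype V] [Fintype W]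
    (G : SimpleGraph V) (H : SimpleGraph W)
    (f : G →g H) (hf : Function.Surjective f)
    (g : H →g G) (hg : Function.Surjective g) :
    Nonempty (G ≃g H) :=
  stmt17_general f hf g hg
end
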